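/- Let H : [0,1] → ℝ be Hölder continuous with 1/2 < H(x) < 1. Define Φ(s,H) := ∫₀^s w^{H−3/2}·((1+w)^{H−1/2} − 1) dw for s > 0, and the kernel q̃₂(x,y) := c_*(H(x)) · y^{H(x)−1/2} · Φ((x−y)/y, H(x)) for 0 < y < x < 1, q̃₂(x,y) := 0 otherwise. Let Q̃₂ : L²(0,1) → L²(0,1) be a bounded operator with (Q̃₂f)(x) = ∫₀¹ q̃₂(x,y) f(y) dy for every f and almost every x. Then Q̃₂ is compact and there exists C > 0 such that 𝒩(t, Q̃₂) ≤ C · t^{2/3} for all t > 1. -/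

import Mathlib

open MeasureTheory Set Filter Metric
open scoped ENNReal NNReal Real

noncomputable section

/-- Approximation numbers (singular values) of a continuous linear map between
complex normed spaces: `s_k(A) = inf {‖A - F‖ : rank F ≤ k}`. -/
def sVal {E F : Type*} [NormedAddCommGroup E] [NormedAddCommGroup F]
    [NormedSpace ℂ E] [NormedSpace ℂ F] (A : E →L[ℂ] F) (k : ℕ) : ℝ :=
  sInf {c : ℝ | ∃ G : E →L[ℂ] F, LinearMap.rank (G : E →ₗ[ℂ] F) ≤ (k : Cardinal) ∧ c = ‖A - G‖}

/-- Counting function of singular values: `𝒩(t, A) = #{k : s_k(A) > 1/t}`. -/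
def sCount {E F : Type*} [NormedAddCommGroup E] [NormedAddCommGroup F]
    [NormedSpace ℂ E] [NormedSpace ℂ F] (A : E →L[ℂ] F) (t : ℝ) : ℕ :=
  Set.ncard {k : ℕ | 1 / t < sVal A k}

/-- `c_*(H) = (H(2H−1)Γ(3/2−H)/(Γ(2−2H)Γ(H−1/2)))^{1/2}`. -/
def cstar (H : ℝ) : ℝ :=
  Real.sqrt (H * (2 * H - 1) * Real.Gamma (3/2 - H) /
    (Real.Gamma (2 - 2*H) * Real.Gamma (H - 1/2)))

/-- `Φ(s, H) = ∫₀^s w^{H-3/2}((1+w)^{H-1/2} − 1) dw`. -/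
def PhiFn (Hv s : ℝ) : ℝ :=
  ∫ w in Ioo (0:ℝ) s, w ^ (Hv - 3/2) * ((1 + w) ^ (Hv - 1/2) - 1)

/-- The kernel `q̃₂(x, y)`. -/
def qTilde₂ (H : ℝ → ℝ) (x y : ℝ) : ℝ :=
  if 0 < y ∧ y < x ∧ x < 1 then
    cstar (H x) * y ^ (H x - 1/2) * PhiFn (H x) ((x - y) / y)
  else 0

/-- Hölder continuity of exponent `r` on a set. -/
def HolderOn (f : ℝ → ℝ) (r : ℝ) (s : Set ℝ) : Prop :=
  ∃ C : ℝ, ∀ x ∈ s, ∀ y ∈ s, |f x - f y| ≤ C * |x - y| ^ r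

/-! For `x ∈ (0, 1)` the section `y ↦ q̃₂(x, y)` is locally Lipschitz on `(0, 1]`, with a power
singularity at `0` of order `b = H x - 1 / 2 < 1 / 2`. Its constant stays bounded as `H x → 1 / 2`,
because `c_*` vanishes there to the order at which `Φ` blows up. On the mesh with nodes
`(j / n) ^ p`, `p` large, every section is within `O(1 / n)` in `L²` of one fixed `n`-dimensional
space `V` of step functions. So `Q̃₂` agrees on `Vᗮ` with an operator of Hilbert–Schmidt norm
`O(1 / n)`, whose `n`-th approximation number is at most that norm divided by `√(n + 1)`; hence
`s_{2n} = O(n ^ (-3 / 2))`, which inverts to the exponent `2 / 3`. -/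

section ApproximationNumbers

variable {E F : Type*} [NormedAddCommGroup E] [NormedAddCommGroup F]

section NormedSpace

variable [NormedSpace ℂ E] [NormedSpace ℂ F]

theorem sVal_le_norm_sub (A G : E →L[ℂ] F) {k : ℕ}
    (hG : LinearMap.rank (G : E →ₗ[ℂ] F) ≤ (k : Cardinal)) : sVal A k ≤ ‖A - G‖ := by
  refine csInf_le ⟨0, ?_⟩ ⟨G, hG, rfl⟩
  rintro _ ⟨_, -, rfl⟩
  exact norm_nonneg _

theorem le_sVal {A : E →L[ℂ] F} {k : ℕ} {c : ℝ}
    (h : ∀ G : E →L[ℂ] F, LinearMap.rank (G : E →ₗ[ℂ] F) ≤ (k : Cardinal) → c ≤ ‖A - G‖) :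
    c ≤ sVal A k := by
  refine le_csInf ⟨_, 0, by simp, rfl⟩ ?_
  rintro _ ⟨G, hG, rfl⟩
  exact h G hG

theorem sVal_antitone (A : E →L[ℂ] F) : Antitone (sVal A) := fun _ _ hkl =>
  le_sVal fun G hG => sVal_le_norm_sub A G (hG.trans (by exact_mod_cast hkl))

theorem sVal_add_le_sVal_sub (A : E →L[ℂ] F) {G : E →L[ℂ] F} {n : ℕ}
    (hG : LinearMap.rank (G : E →ₗ[ℂ] F) ≤ (n : Cardinal)) (m : ℕ) :
    sVal A (n + m) ≤ sVal (A - G) m := by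
  refine le_sVal fun G' hG' => ?_
  rw [sub_sub]
  refine sVal_le_norm_sub A (G + G') ?_
  rw [ContinuousLinearMap.toLinearMap_add, Nat.cast_add]
  exact (LinearMap.rank_add_le _ _).trans (add_le_add hG hG')

theorem sCount_le_of_sVal_le {A : E →L[ℂ] F} {n : ℕ} {t : ℝ} (h : sVal A n ≤ 1 / t) :
    sCount A t ≤ n := by
  have hsub : {k : ℕ | 1 / t < sVal A k} ⊆ Iio n := fun k hk =>
    not_le.1 fun hnk => (hk : 1 / t < sVal A k).not_ge ((sVal_antitone A hnk).trans h)
  calc sCount A t ≤ (Iio n).ncard := ncard_le_ncard hsub (finite_Iio n)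
    _ = n := by rw [← Finset.coe_Iio, ncard_coe_finset, Nat.card_Iio]

theorem exists_forall_sCount_le_mul_rpow {A : E →L[ℂ] F} {D q : ℝ} {l : ℕ} (hq : 0 < q)
    (h : ∀ n : ℕ, 1 ≤ n → sVal A (l * n) ≤ D * (n : ℝ) ^ (-q)) :
    ∃ C : ℝ, 0 < C ∧ ∀ t : ℝ, 1 < t → (sCount A t : ℝ) ≤ C * t ^ q⁻¹ := by
  have hD : 0 ≤ D := by
    simpa using (le_sVal fun G _ => norm_nonneg (A - G)).trans (h 1 le_rfl)
  refine ⟨l * (D ^ q⁻¹ + 2) + 1, by positivity, fun t ht => ?_⟩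
  have ht0 : 0 < t := zero_lt_one.trans ht
  have one_le_tpow : 1 ≤ t ^ q⁻¹ := Real.one_le_rpow ht.le (inv_nonneg.2 hq.le)
  set n : ℕ := ⌈(D * t) ^ q⁻¹⌉₊ + 1 with hn
  have hn0 : (0 : ℝ) < n := by positivity
  have root_le : (D * t) ^ q⁻¹ ≤ n := by
    rw [hn, Nat.cast_add_one]
    exact (Nat.le_ceil _).trans (le_add_of_nonneg_right zero_le_one)
  have n_le : (n : ℝ) ≤ D ^ q⁻¹ * t ^ q⁻¹ + 2 := by
    rw [← Real.mul_rpow hD ht0.le, hn, Nat.cast_add_one]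
    linarith [Nat.ceil_lt_add_one (a := (D * t) ^ q⁻¹) (by positivity)]
  have sVal_le : sVal A (l * n) ≤ 1 / t := by
    refine (h n (Nat.le_add_left 1 _)).trans ?_
    rw [Real.rpow_neg hn0.le, ← div_eq_mul_inv, div_le_div_iff₀ (by positivity) ht0, one_mul]
    exact (Real.rpow_inv_le_iff_of_pos (by positivity) hn0.le hq).1 root_le
  have count_le : (sCount A t : ℝ) ≤ l * n := by
    exact_mod_cast sCount_le_of_sVal_le sVal_le
  calc (sCount A t : ℝ) ≤ l * (D ^ q⁻¹ * t ^ q⁻¹ + 2 * t ^ q⁻¹) + t ^ q⁻¹ := by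
        refine (count_le.trans ?_).trans (le_add_of_nonneg_right (by positivity))
        gcongr
        linarith
    _ = (l * (D ^ q⁻¹ + 2) + 1) * t ^ q⁻¹ := by ring

theorem isCompactOperator_of_rank_lt_aleph0 (G : E →L[ℂ] F)
    (hG : LinearMap.rank (G : E →ₗ[ℂ] F) < Cardinal.aleph0) : IsCompactOperator G := by
  let R := LinearMap.range (G : E →ₗ[ℂ] F)
  have : FiniteDimensional ℂ R := Module.rank_lt_aleph0_iff.1 hG
  have : ProperSpace R := FiniteDimensional.proper ℂ R
  exact (isCompactOperator_of_locallyCompactSpace_rng R.subtypeL).comp_clm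
    (G.codRestrict R fun x => ⟨x, rfl⟩)

theorem isCompactOperator_of_forall_exists_sVal_lt [CompleteSpace F] {A : E →L[ℂ] F}
    (h : ∀ ε > 0, ∃ k, sVal A k < ε) : IsCompactOperator A := by
  have hclosed :=
    isClosed_setOfPred_isCompactOperator (σ₁₂ := RingHom.id ℂ) (M₁ := E) (M₂ := F)
  refine hclosed.closure_subset (Metric.mem_closure_iff.2 fun ε hε => ?_)
  obtain ⟨k, hk⟩ := h ε hε
  obtain ⟨_, ⟨G, hG, rfl⟩, hlt⟩ :=
    exists_lt_of_csInf_lt (by exact ⟨_, 0, by simp, rfl⟩) hk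
  exact ⟨G, isCompactOperator_of_rank_lt_aleph0 G (hG.trans_lt Cardinal.natCast_lt_aleph0),
    by rwa [dist_eq_norm]⟩

theorem isCompactOperator_of_sVal_le_mul_rpow [CompleteSpace F] {A : E →L[ℂ] F} {D q : ℝ} {l : ℕ}
    (hq : 0 < q) (h : ∀ n : ℕ, 1 ≤ n → sVal A (l * n) ≤ D * (n : ℝ) ^ (-q)) :
    IsCompactOperator A := by
  have hlim : Tendsto (fun n : ℕ => D * (n : ℝ) ^ (-q)) atTop (nhds 0) := by
    simpa using ((tendsto_rpow_neg_atTop hq).comp tendsto_natCast_atTop_atTop).const_mul D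
  refine isCompactOperator_of_forall_exists_sVal_lt fun ε hε => ?_
  obtain ⟨n, hn, hn1⟩ := ((hlim.eventually_lt_const hε).and (eventually_ge_atTop 1)).exists
  exact ⟨l * n, (h n hn1).trans_lt hn⟩

end NormedSpace

section InnerProductSpace

variable [InnerProductSpace ℂ E]

theorem norm_sub_starProjection_le (V : Submodule ℂ E) [V.HasOrthogonalProjection] (x : E) {v : E}
    (hv : v ∈ V) : ‖x - V.starProjection x‖ ≤ ‖x - v‖ := by
  rw [V.starProjection_minimal]
  have hbdd : BddBelow (range fun w : V => ‖x - w‖) :=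
    ⟨0, by rintro _ ⟨w, rfl⟩; exact norm_nonneg _⟩
  exact ciInf_le hbdd ⟨v, hv⟩

variable [NormedSpace ℂ F]

theorem rank_comp_starProjection_le (A : E →L[ℂ] F) (V : Submodule ℂ E)
    [FiniteDimensional ℂ V] :
    LinearMap.rank ((A ∘L V.starProjection : E →L[ℂ] F) : E →ₗ[ℂ] F) ≤
      (Module.finrank ℂ V : Cardinal) := by
  have hrange : LinearMap.range ((A ∘L V.starProjection : E →L[ℂ] F) : E →ₗ[ℂ] F) ≤
      V.map (A : E →ₗ[ℂ] F) := by
    rintro _ ⟨v, rfl⟩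
    exact ⟨_, V.starProjection_apply_mem v, rfl⟩
  refine (Submodule.rank_mono hrange).trans ?_
  rw [← Module.finrank_eq_rank]
  exact_mod_cast Submodule.finrank_map_le (A : E →ₗ[ℂ] F) V

theorem exists_norm_eq_one_mem_orthogonal_lt_norm_apply {A : E →L[ℂ] F} {c : ℝ} {m : ℕ}
    (hc : 0 ≤ c) (h : c < sVal A m) (W : Submodule ℂ E) [FiniteDimensional ℂ W]
    (hW : Module.finrank ℂ W ≤ m) : ∃ w ∈ Wᗮ, ‖w‖ = 1 ∧ c < ‖A w‖ := by
  have hlt : c < ‖A - A ∘L W.starProjection‖ := h.trans_le <| sVal_le_norm_sub A _ <|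
    (rank_comp_starProjection_le A W).trans (by exact_mod_cast hW)
  obtain ⟨v, hv⟩ : ∃ v, c * ‖v‖ < ‖(A - A ∘L W.starProjection) v‖ := by
    by_contra! hcon
    exact hlt.not_ge (ContinuousLinearMap.opNorm_le_bound _ hc hcon)
  set u := v - W.starProjection v with hu
  have hAu : c * ‖u‖ < ‖A u‖ := by
    have huv : ‖u‖ ≤ ‖v‖ := by simpa using norm_sub_starProjection_le W v W.zero_mem
    have hval : (A - A ∘L W.starProjection) v = A u := by simp [hu]
    exact (mul_le_mul_of_nonneg_left huv hc).trans_lt (hval ▸ hv)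
  have hu0 : 0 < ‖u‖ := norm_pos_iff.2 fun h0 => by simp [h0] at hAu
  refine ⟨((‖u‖⁻¹ : ℝ) : ℂ) • u,
    Submodule.smul_mem _ _ (W.sub_starProjection_mem_orthogonal v), ?_, ?_⟩
  · simp [norm_smul, hu0.ne']
  · rw [map_smul, norm_smul, Complex.norm_real, norm_inv, norm_norm, inv_mul_eq_div,
      lt_div_iff₀ hu0]
    exact hAu

theorem exists_orthonormal_forall_lt_norm_apply {A : E →L[ℂ] F} {c : ℝ} {m : ℕ} (hc : 0 ≤ c)
    (h : c < sVal A m) {k : ℕ} (hk : k ≤ m + 1) :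
    ∃ e : Fin k → E, Orthonormal ℂ e ∧ ∀ i, c < ‖A (e i)‖ := by
  induction k with
  | zero => exact ⟨Fin.elim0, by simp [Orthonormal], fun i => i.elim0⟩
  | succ k ih =>
    obtain ⟨e, he, hA⟩ := ih (Nat.le_of_succ_le hk)
    have : FiniteDimensional ℂ (Submodule.span ℂ (range e)) :=
      FiniteDimensional.span_of_finite ℂ (finite_range e)
    have hfinrank : Module.finrank ℂ (Submodule.span ℂ (range e)) ≤ m := by
      rw [finrank_span_eq_card he.linearIndependent, Fintype.card_fin]
      omega
    obtain ⟨w, hw, hw1, hAw⟩ :=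
      exists_norm_eq_one_mem_orthogonal_lt_norm_apply hc h _ hfinrank
    refine ⟨Matrix.vecCons w e, orthonormal_vecCons_iff.2 ⟨hw1, fun i => ?_, he⟩,
      Fin.cases hAw hA⟩
    exact Submodule.inner_left_of_mem_orthogonal (Submodule.subset_span (mem_range_self i)) hw

theorem sVal_le_div_sqrt_of_sum_norm_sq_le {A : E →L[ℂ] F} {S : ℝ} (hS : 0 ≤ S) (m : ℕ)
    (h : ∀ e : Fin (m + 1) → E, Orthonormal ℂ e → ∑ i, ‖A (e i)‖ ^ 2 ≤ S ^ 2) :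
    sVal A m ≤ S / √(m + 1) := by
  by_contra! hlt
  obtain ⟨e, he, hA⟩ := exists_orthonormal_forall_lt_norm_apply (by positivity) hlt le_rfl
  have hsum : ∑ _i : Fin (m + 1), (S / √(m + 1)) ^ 2 < ∑ i, ‖A (e i)‖ ^ 2 := by
    refine Finset.sum_lt_sum_of_nonempty Finset.univ_nonempty fun i _ => ?_
    have := hA i
    gcongr
  have hconst : ∑ _i : Fin (m + 1), (S / √(m + 1)) ^ 2 = S ^ 2 := by
    rw [Finset.sum_const, Finset.card_univ, Fintype.card_fin, nsmul_eq_mul, div_pow,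
      Real.sq_sqrt (by positivity), Nat.cast_add_one, mul_div_cancel₀ _ (by positivity)]
  exact ((hconst ▸ hsum).trans_le (h e he)).false

end InnerProductSpace

end ApproximationNumbers

section Carleman

variable {α E : Type*} [MeasurableSpace α] {ν : Measure α} [NormedAddCommGroup E]
  [InnerProductSpace ℂ E]

theorem L2_norm_sq_eq_integral (f : Lp ℂ 2 ν) : ‖f‖ ^ 2 = ∫ x, ‖f x‖ ^ 2 ∂ν := by
  have h := L2.inner_def (𝕜 := ℂ) f f
  simp only [inner_self_eq_norm_sq_to_K] at h
  apply Complex.ofReal_injective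
  rw [← integral_complex_ofReal]
  exact_mod_cast h

/-- `T` is a Carleman operator with Carleman function `k`: the value of `T f` at almost every
point `x` is the inner product of `f` with the vector `k x`. For an integral operator, `k x` is
the complex conjugate of the section of the kernel at `x`. -/
def HasCarlemanFunction (T : E →L[ℂ] Lp ℂ 2 ν) (k : α → E) : Prop :=
  ∀ f, ∀ᵐ x ∂ν, T f x = inner ℂ (k x) f

theorem exists_hasCarlemanFunction_ae_eq {β : Type*} [MeasurableSpace β] {μ : Measure β}
    {T : Lp ℂ 2 μ →L[ℂ] Lp ℂ 2 ν} {K : α → β → ℂ}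
    (hT : ∀ f : Lp ℂ 2 μ, ∀ᵐ x ∂ν, T f x = ∫ y, K x y * f y ∂μ)
    (hK : ∀ᵐ x ∂ν, MemLp (star (K x)) 2 μ) :
    ∃ k : α → Lp ℂ 2 μ, HasCarlemanFunction T k ∧ ∀ᵐ x ∂ν, k x =ᵐ[μ] star (K x) := by
  have hsection : ∀ x, ∃ v : Lp ℂ 2 μ, MemLp (star (K x)) 2 μ → v =ᵐ[μ] star (K x) := fun x => by
    by_cases h : MemLp (star (K x)) 2 μ
    · exact ⟨h.toLp, fun _ => h.coeFn_toLp⟩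
    · exact ⟨0, fun h' => absurd h' h⟩
  choose k hk using hsection
  refine ⟨k, fun f => ?_, hK.mono hk⟩
  filter_upwards [hT f, hK.mono hk] with x hTx hkx
  rw [hTx, L2.inner_def]
  refine integral_congr_ae ?_
  filter_upwards [hkx] with y hy
  simp only [hy, Pi.star_apply, RCLike.inner_apply, RCLike.star_def, Complex.conj_conj, mul_comm]

namespace HasCarlemanFunction

variable {T : E →L[ℂ] Lp ℂ 2 ν} {k : α → E}

theorem sub_comp_starProjection (hT : HasCarlemanFunction T k) (V : Submodule ℂ E)
    [V.HasOrthogonalProjection] :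
    HasCarlemanFunction (T - T ∘L V.starProjection) fun x => k x - V.starProjection (k x) := by
  intro f
  filter_upwards [hT f, hT (V.starProjection f), Lp.coeFn_sub (T f) (T (V.starProjection f))]
    with x hf hPf hsub
  rw [sub_apply, ContinuousLinearMap.comp_apply, hsub, Pi.sub_apply, hf, hPf,
    inner_sub_left, V.inner_starProjection_left_eq_right]

theorem sum_norm_sq_le [IsFiniteMeasure ν] (hT : HasCarlemanFunction T k) {δ : ℝ}
    (hk : ∀ᵐ x ∂ν, ‖k x‖ ≤ δ) {ι : Type*} [Fintype ι] {e : ι → E} (he : Orthonormal ℂ e) :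
    ∑ i, ‖T (e i)‖ ^ 2 ≤ δ ^ 2 * ν.real univ := by
  have hint : ∀ i, Integrable (fun x => ‖T (e i) x‖ ^ 2) ν := fun i =>
    (Lp.memLp (T (e i))).integrable_norm_pow two_ne_zero
  have hae : ∀ᵐ x ∂ν, ∑ i, ‖T (e i) x‖ ^ 2 ≤ δ ^ 2 := by
    filter_upwards [ae_all_iff.2 fun i => hT (e i), hk] with x hx hkx
    calc ∑ i, ‖T (e i) x‖ ^ 2 = ∑ i, ‖inner ℂ (e i) (k x)‖ ^ 2 :=
          Finset.sum_congr rfl fun i _ => by rw [hx i, norm_inner_symm]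
      _ ≤ ‖k x‖ ^ 2 := he.sum_inner_products_le (k x)
      _ ≤ δ ^ 2 := by gcongr
  calc ∑ i, ‖T (e i)‖ ^ 2 = ∫ x, ∑ i, ‖T (e i) x‖ ^ 2 ∂ν := by
        rw [integral_finsetSum _ fun i _ => hint i]
        simp only [L2_norm_sq_eq_integral]
    _ ≤ ∫ _, δ ^ 2 ∂ν :=
        integral_mono_ae (integrable_finsetSum _ fun i _ => hint i) (integrable_const _) hae
    _ = δ ^ 2 * ν.real univ := by rw [integral_const, smul_eq_mul, mul_comm]

-- Compressing to `Vᗮ` costs rank `n` and leaves an operator of Hilbert–Schmidt norm `O(δ)`.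
theorem sVal_add_le [IsFiniteMeasure ν] (hT : HasCarlemanFunction T k) (V : Submodule ℂ E)
    [FiniteDimensional ℂ V] {n : ℕ} (hV : Module.finrank ℂ V ≤ n) {δ : ℝ} (hδ : 0 ≤ δ)
    (hk : ∀ᵐ x ∂ν, ∃ v ∈ V, ‖k x - v‖ ≤ δ) (m : ℕ) :
    sVal T (n + m) ≤ δ * √(ν.real univ) / √(m + 1) := by
  have hdist : ∀ᵐ x ∂ν, ‖k x - V.starProjection (k x)‖ ≤ δ := by
    filter_upwards [hk] with x ⟨v, hv, hle⟩
    exact (norm_sub_starProjection_le V (k x) hv).trans hle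
  have hrank := (rank_comp_starProjection_le T V).trans (Nat.cast_le.2 hV)
  refine (sVal_add_le_sVal_sub T hrank m).trans
    (sVal_le_div_sqrt_of_sum_norm_sq_le (by positivity) m fun e he => ?_)
  rw [mul_pow, Real.sq_sqrt measureReal_nonneg]
  exact (hT.sub_comp_starProjection V).sum_norm_sq_le hdist he

end HasCarlemanFunction

end Carleman

section GradedMesh

variable {α ι : Type*} [MeasurableSpace α] {μ : Measure α} [IsFiniteMeasure μ] [Finite ι]
  [MeasurableSpace ι] [MeasurableSingletonClass ι] {κ : α → ι}

theorem memLp_comp_of_finite (hκ : Measurable κ) (c : ι → ℂ) : MemLp (c ∘ κ) 2 μ := by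
  have := Fintype.ofFinite ι
  exact .of_bound ((measurable_of_countable c).comp hκ).aestronglyMeasurable ‖c‖
    (Eventually.of_forall fun _ => norm_le_pi_norm c _)

variable (μ) in
/-- The linear map sending `c : ι → ℂ` to the class of the step function `c ∘ κ`, where `κ` assigns
to each point the index of its cell. -/
def stepLp (hκ : Measurable κ) : (ι → ℂ) →ₗ[ℂ] Lp ℂ 2 μ where
  toFun c := (memLp_comp_of_finite hκ c).toLp
  map_add' _ _ := rfl
  map_smul' _ _ := rfl

theorem coeFn_stepLp (hκ : Measurable κ) (c : ι → ℂ) : stepLp μ hκ c =ᵐ[μ] c ∘ κ :=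
  (memLp_comp_of_finite hκ c).coeFn_toLp

/-- The index of the cell containing `y ∈ (0, 1)` in the graded mesh with nodes `(j / n) ^ p`. -/
def gradedCell (n p : ℕ) [NeZero n] (y : ℝ) : Fin n :=
  Fin.ofNat n ⌊n * y ^ (p : ℝ)⁻¹⌋₊

theorem measurable_gradedCell (n p : ℕ) [NeZero n] : Measurable (gradedCell n p) :=
  (measurable_of_countable _).comp (Nat.measurable_floor.comp (by fun_prop))

theorem val_gradedCell {n p : ℕ} [NeZero n] {y : ℝ} (hp : p ≠ 0) (hy : y ∈ Ioo 0 1) :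
    (gradedCell n p y : ℕ) = ⌊n * y ^ (p : ℝ)⁻¹⌋₊ := by
  have hn : (0 : ℝ) < n := Nat.cast_pos.2 (NeZero.pos n)
  have hroot : y ^ (p : ℝ)⁻¹ < 1 := Real.rpow_lt_one hy.1.le hy.2 (by positivity)
  refine Nat.mod_eq_of_lt ((Nat.floor_lt (by have := hy.1; positivity)).2 ?_)
  exact mul_lt_of_lt_one_right hn hroot

theorem pow_sub_pow_le_mul {u v ε : ℝ} (hu : 0 ≤ u) (huv : u ≤ v) (hv : v ≤ 2 * u)
    (hε : v - u ≤ ε) (p : ℕ) : v ^ p - u ^ p ≤ ε * (p * 2 ^ p * u ^ (p - 1)) := by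
  have hv0 : 0 ≤ v := hu.trans huv
  have hε0 : 0 ≤ ε := (sub_nonneg.2 huv).trans hε
  have hpow : v ^ (p - 1) ≤ 2 ^ p * u ^ (p - 1) := by
    calc v ^ (p - 1) ≤ (2 * u) ^ (p - 1) := by gcongr
      _ = 2 ^ (p - 1) * u ^ (p - 1) := mul_pow _ _ _
      _ ≤ 2 ^ p * u ^ (p - 1) := by
        gcongr
        exacts [one_le_two, p.sub_le 1]
  calc v ^ p - u ^ p ≤ |v ^ p - u ^ p| := le_abs_self _
    _ ≤ (v - u) * p * v ^ (p - 1) := by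
      simpa [abs_of_nonneg, hu, hv0, huv, sub_nonneg.2 huv] using abs_pow_sub_pow_le v u p
    _ ≤ ε * p * (2 ^ p * u ^ (p - 1)) := by gcongr
    _ = ε * (p * 2 ^ p * u ^ (p - 1)) := by ring

/-- `q` has at worst a power singularity of order `b` at the left end of `(0, 1]`: it is
`O(y ^ (-b))` and its difference quotients are `O(y ^ (-1 - b))`, both with constant `M`. -/
structure SingularAtZero {E : Type*} [NormedAddCommGroup E] (q : ℝ → E) (M b : ℝ) : Prop where
  norm_le : ∀ ⦃y⦄, 0 < y → y ≤ 1 → ‖q y‖ ≤ M * y ^ (-b)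
  norm_sub_le : ∀ ⦃y y'⦄, 0 < y → y ≤ y' → y' ≤ 1 → ‖q y - q y'‖ ≤ M * ((y' - y) * y ^ (-1 - b))

theorem memLp_rpow_neg {γ : ℝ} (hγ : γ < 1 / 2) :
    MemLp (fun y : ℝ => y ^ (-γ)) 2 (volume.restrict (Ioo 0 1)) := by
  have hmeas : Measurable fun y : ℝ => y ^ (-γ) := by fun_prop
  rw [memLp_two_iff_integrable_sq hmeas.aestronglyMeasurable]
  have hint : IntegrableOn (fun y : ℝ => y ^ (-γ * 2)) (Ioo 0 1) :=
    (intervalIntegral.integrableOn_Ioo_rpow_iff zero_lt_one).2 (by linarith)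
  refine hint.congr_fun (fun y hy => ?_) measurableSet_Ioo
  simp only [Real.rpow_mul_natCast hy.1.le (-γ) 2, ← Nat.cast_ofNat (R := ℝ) (n := 2)]

namespace SingularAtZero

variable {E : Type*} [NormedAddCommGroup E] {q : ℝ → E} {M b : ℝ}

theorem nonneg (hq : SingularAtZero q M b) : 0 ≤ M := by
  simpa using (norm_nonneg _).trans (hq.norm_le zero_lt_one le_rfl)

theorem conj {q : ℝ → ℂ} (hq : SingularAtZero q M b) : SingularAtZero (star q) M b where
  norm_le y hy hy1 := by simpa using hq.norm_le hy hy1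
  norm_sub_le y y' hy hyy' hy' := by
    simpa only [Pi.star_apply, ← star_sub, norm_star] using hq.norm_sub_le hy hyy' hy'

theorem mono (hq : SingularAtZero q M b) {M' b' : ℝ} (hM : M ≤ M') (hb : b ≤ b') :
    SingularAtZero q M' b' where
  norm_le y hy hy1 := by
    have hM0 := hq.nonneg.trans hM
    refine (hq.norm_le hy hy1).trans ?_
    gcongr ?_ * ?_
    exact Real.rpow_le_rpow_of_exponent_ge hy hy1 (neg_le_neg hb)
  norm_sub_le y y' hy hyy' hy' := by
    have hM0 := hq.nonneg.trans hM
    refine (hq.norm_sub_le hy hyy' hy').trans ?_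
    gcongr ?_ * (_ * ?_)
    exact Real.rpow_le_rpow_of_exponent_ge hy (hyy'.trans hy') (sub_le_sub_left hb _)

theorem congr (hq : SingularAtZero q M b) {q' : ℝ → E} (h : EqOn q' q (Ioc 0 1)) :
    SingularAtZero q' M b where
  norm_le y hy hy1 := by
    rw [h ⟨hy, hy1⟩]
    exact hq.norm_le hy hy1
  norm_sub_le y y' hy hyy' hy' := by
    rw [h ⟨hy, hyy'.trans hy'⟩, h ⟨hy.trans_le hyy', hy'⟩]
    exact hq.norm_sub_le hy hyy' hy'

theorem ofReal_const_mul {q : ℝ → ℝ} (hq : SingularAtZero q M b) (c : ℝ) :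
    SingularAtZero (fun y => ((c * q y : ℝ) : ℂ)) (|c| * M) b where
  norm_le y hy hy1 := by
    rw [Complex.norm_real, norm_mul, Real.norm_eq_abs c, mul_assoc]
    gcongr
    exact hq.norm_le hy hy1
  norm_sub_le y y' hy hyy' hy' := by
    rw [← Complex.ofReal_sub, Complex.norm_real, ← mul_sub, norm_mul, Real.norm_eq_abs c,
      mul_assoc]
    gcongr
    exact hq.norm_sub_le hy hyy' hy'

theorem continuousOn (hq : SingularAtZero q M b) : ContinuousOn q (Ioo 0 1) := by
  intro y hy
  have hlim : Tendsto (fun z => M * (|z - y| * min z y ^ (-1 - b))) (nhdsWithin y (Ioo 0 1))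
      (nhds 0) := by
    have hcont : ContinuousAt (fun z => M * (|z - y| * min z y ^ (-1 - b))) y :=
      continuousAt_const.mul <| ContinuousAt.mul (by fun_prop) <|
        ContinuousAt.rpow_const (by fun_prop) (Or.inl (by simpa using hy.1.ne'))
    simpa using hcont.continuousWithinAt.tendsto
  refine tendsto_iff_norm_sub_tendsto_zero.2 (squeeze_zero' (by simp) ?_ hlim)
  filter_upwards [self_mem_nhdsWithin] with z hz
  rcases le_total z y with hzy | hyz
  · simpa [hzy, abs_sub_comm z y, abs_of_nonneg (sub_nonneg.2 hzy)] using
      hq.norm_sub_le hz.1 hzy hy.2.le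
  · simpa [hyz, norm_sub_rev (q z), abs_of_nonneg (sub_nonneg.2 hyz)] using
      hq.norm_sub_le hy.1 hyz hz.2.le

theorem memLp (hq : SingularAtZero q M b) (hb : b < 1 / 2) :
    MemLp q 2 (volume.restrict (Ioo 0 1)) := by
  refine (memLp_rpow_neg hb).of_le_mul (c := M)
    (hq.continuousOn.aestronglyMeasurable measurableSet_Ioo) ?_
  filter_upwards [ae_restrict_mem measurableSet_Ioo] with y hy
  rw [Real.norm_of_nonneg (Real.rpow_nonneg hy.1.le _)]
  exact hq.norm_le hy.1 hy.2.le

end SingularAtZero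

/-- The values of `q` at the right nodes of the graded mesh, except that the cell touching the
singularity gets the value `0`. -/
def rightNodeValue {E : Type*} [NormedAddCommGroup E] (q : ℝ → E) (n p : ℕ) [NeZero n]
    (j : Fin n) : E :=
  if j = 0 then 0 else q (((j + 1 : ℝ) / n) ^ p)

theorem floor_add_one_div_bounds {n : ℕ} {u : ℝ} (hn : 0 < n) (hu : 0 ≤ u) (hu1 : u < 1)
    (hfloor : ⌊n * u⌋₊ ≠ 0) :
    u ≤ (⌊n * u⌋₊ + 1 : ℝ) / n ∧ (⌊n * u⌋₊ + 1 : ℝ) / n ≤ 2 * u ∧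
      (⌊n * u⌋₊ + 1 : ℝ) / n - u ≤ 1 / n ∧ (⌊n * u⌋₊ + 1 : ℝ) / n ≤ 1 := by
  have hn0 : (0 : ℝ) < n := Nat.cast_pos.2 hn
  have one_le : (1 : ℝ) ≤ ⌊n * u⌋₊ := by exact_mod_cast Nat.one_le_iff_ne_zero.2 hfloor
  have floor_le : (⌊n * u⌋₊ : ℝ) ≤ n * u := Nat.floor_le (by positivity)
  have floor_lt : ⌊n * u⌋₊ < n :=
    (Nat.floor_lt (by positivity)).2 (mul_lt_of_lt_one_right hn0 hu1)
  refine ⟨?_, ?_, ?_, ?_⟩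
  · rw [le_div_iff₀ hn0]
    linarith [Nat.lt_floor_add_one (n * u)]
  · rw [div_le_iff₀ hn0]
    linarith
  · rw [sub_le_iff_le_add, div_le_iff₀ hn0, add_mul, one_div_mul_cancel hn0.ne']
    linarith
  · rw [div_le_one hn0]
    exact_mod_cast floor_lt

section

variable {E : Type*} [NormedAddCommGroup E] {q : ℝ → E} {M b : ℝ} {n p : ℕ} {u : ℝ}

theorem SingularAtZero.norm_pow_le_of_mul_lt_one (hq : SingularAtZero q M b) (hn : 0 < n)
    (hp : p ≠ 0) (hu : 0 < u) (hu1 : u ≤ 1) (hnu : n * u < 1) :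
    ‖q (u ^ p)‖ ≤ M * (p * 2 ^ p) / n * ((u ^ p) ^ (-b) / u) := by
  have hM := hq.nonneg
  have one_le : 1 ≤ (p * 2 ^ p : ℝ) / (n * u) := by
    rw [one_le_div (by positivity)]
    refine hnu.le.trans (one_le_mul_of_one_le_of_one_le ?_ (one_le_pow₀ one_le_two))
    exact_mod_cast Nat.one_le_iff_ne_zero.2 hp
  calc ‖q (u ^ p)‖ ≤ M * (u ^ p) ^ (-b) * 1 := by
        simpa using hq.norm_le (pow_pos hu p) (pow_le_one₀ hu.le hu1)
    _ ≤ M * (u ^ p) ^ (-b) * ((p * 2 ^ p : ℝ) / (n * u)) := by gcongr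
    _ = M * (p * 2 ^ p) / n * ((u ^ p) ^ (-b) / u) := by field_simp

-- Grading the mesh makes the cell at `y` have length `O(y ^ (1 - 1 / p) / n)`, which trades the
-- nonintegrable factor `y ^ (-1 - b)` for `y ^ (-(b + 1 / p))`; here `y = u ^ p`.
theorem SingularAtZero.norm_pow_sub_node_le (hq : SingularAtZero q M b) (hn : 0 < n) (hp : p ≠ 0)
    (hu : 0 < u) (hu1 : u < 1) (hfloor : ⌊n * u⌋₊ ≠ 0) :
    ‖q (u ^ p) - q (((⌊n * u⌋₊ + 1 : ℝ) / n) ^ p)‖ ≤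
      M * (p * 2 ^ p) / n * ((u ^ p) ^ (-b) / u) := by
  have hM := hq.nonneg
  have hup : 0 < u ^ p := pow_pos hu p
  obtain ⟨hle, hle_two, hsub, hle_one⟩ := floor_add_one_div_bounds hn hu.le hu1 hfloor
  set v : ℝ := (⌊n * u⌋₊ + 1 : ℝ) / n
  have hlength : v ^ p - u ^ p ≤ 1 / n * (p * 2 ^ p * (u ^ p / u)) := by
    rw [← pow_sub_one_mul hp u, mul_div_cancel_right₀ _ hu.ne', pow_sub_one_mul hp u]
    exact pow_sub_pow_le_mul hu.le hle hle_two hsub p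
  have hweight : (u ^ p) ^ (-1 - b) = (u ^ p) ^ (-b) / u ^ p := by
    rw [← Real.rpow_sub_one hup.ne', neg_sub_comm]
  calc ‖q (u ^ p) - q (v ^ p)‖ ≤ M * ((v ^ p - u ^ p) * (u ^ p) ^ (-1 - b)) :=
        hq.norm_sub_le hup (pow_le_pow_left₀ hu.le hle p)
          (pow_le_one₀ (hu.le.trans hle) hle_one)
    _ ≤ M * (1 / n * (p * 2 ^ p * (u ^ p / u)) * ((u ^ p) ^ (-b) / u ^ p)) := by
        rw [hweight]
        gcongr
    _ = M * (p * 2 ^ p) / n * ((u ^ p) ^ (-b) / u) := by field_simp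

theorem SingularAtZero.norm_sub_rightNodeValue_le [NeZero n] (hq : SingularAtZero q M b)
    (hp : p ≠ 0) {y : ℝ} (hy : y ∈ Ioo 0 1) :
    ‖q y - rightNodeValue q n p (gradedCell n p y)‖ ≤
      M * (p * 2 ^ p) / n * y ^ (-(b + (p : ℝ)⁻¹)) := by
  have hcell := val_gradedCell (n := n) hp hy
  have hweight : y ^ (-(b + (p : ℝ)⁻¹)) = y ^ (-b) / y ^ (p : ℝ)⁻¹ := by
    rw [neg_add, Real.rpow_add hy.1, Real.rpow_neg hy.1.le (p : ℝ)⁻¹, div_eq_mul_inv]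
  have hup : (y ^ (p : ℝ)⁻¹) ^ p = y := Real.rpow_inv_natCast_pow hy.1.le hp
  have hu1 : y ^ (p : ℝ)⁻¹ < 1 := Real.rpow_lt_one hy.1.le hy.2 (by positivity)
  have hu : 0 < y ^ (p : ℝ)⁻¹ := Real.rpow_pos_of_pos hy.1 _
  rw [rightNodeValue, hweight]
  split_ifs with h0
  · have hfloor : n * y ^ (p : ℝ)⁻¹ < 1 := Nat.floor_eq_zero.1 (by simpa [h0] using hcell.symm)
    simpa [hup] using hq.norm_pow_le_of_mul_lt_one (NeZero.pos n) hp hu hu1.le hfloor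
  · have hfloor : ⌊n * y ^ (p : ℝ)⁻¹⌋₊ ≠ 0 := fun h => h0 (Fin.ext (hcell.trans h))
    simpa [hup, hcell] using hq.norm_pow_sub_node_le (NeZero.pos n) hp hu hu1 hfloor

end

theorem SingularAtZero.norm_sub_stepLp_le {q : ℝ → ℂ} {M b : ℝ} (hq : SingularAtZero q M b)
    {n p : ℕ} [NeZero n] (hp : p ≠ 0) (hb : b + (p : ℝ)⁻¹ < 1 / 2)
    {v : Lp ℂ 2 (volume.restrict (Ioo (0 : ℝ) 1))} (hv : v =ᵐ[volume.restrict (Ioo 0 1)] q) :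
    ‖v - stepLp _ (measurable_gradedCell n p) (rightNodeValue q n p)‖ ≤
      M * (p * 2 ^ p) / n * ‖(memLp_rpow_neg hb).toLp‖ := by
  refine Lp.norm_le_mul_norm_of_ae_le_mul ?_
  set s := stepLp (volume.restrict (Ioo 0 1)) (measurable_gradedCell n p) (rightNodeValue q n p)
  filter_upwards [hv, coeFn_stepLp (measurable_gradedCell n p) (rightNodeValue q n p),
    (memLp_rpow_neg hb).coeFn_toLp, Lp.coeFn_sub v s, ae_restrict_mem measurableSet_Ioo]
    with y hvy hstep hweight hsub hy
  rw [hsub, Pi.sub_apply, hvy, hstep, hweight, Real.norm_of_nonneg (Real.rpow_nonneg hy.1.le _)]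
  exact hq.norm_sub_rightNodeValue_le hp hy

theorem exists_sVal_two_mul_le_mul_rpow {α : Type*} [MeasurableSpace α] {ν : Measure α}
    [IsFiniteMeasure ν] {T : Lp ℂ 2 (volume.restrict (Ioo (0 : ℝ) 1)) →L[ℂ] Lp ℂ 2 ν}
    {K : α → ℝ → ℂ} (hT : ∀ f, ∀ᵐ x ∂ν, T f x = ∫ y in Ioo 0 1, K x y * f y) {M b : ℝ}
    (hM : 0 ≤ M) (hb : b < 1 / 2) (hK : ∀ᵐ x ∂ν, SingularAtZero (K x) M b) :
    ∃ D : ℝ, ∀ n : ℕ, 1 ≤ n → sVal T (2 * n) ≤ D * (n : ℝ) ^ (-(3 / 2) : ℝ) := by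
  obtain ⟨k, hk, hk_eq⟩ :=
    exists_hasCarlemanFunction_ae_eq hT (hK.mono fun _ h => h.conj.memLp hb)
  obtain ⟨p₀, hp₀⟩ := exists_nat_one_div_lt (sub_pos.2 hb)
  set p := p₀ + 1 with hp
  have hbp : b + (p : ℝ)⁻¹ < 1 / 2 := by
    rw [hp, Nat.cast_add_one, inv_eq_one_div]
    linarith
  set W := ‖(memLp_rpow_neg hbp).toLp‖
  refine ⟨M * (p * 2 ^ p) * W * √(ν.real univ), fun n hn => ?_⟩
  have : NeZero n := ⟨Nat.one_le_iff_ne_zero.1 hn⟩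
  have hn0 : (0 : ℝ) < n := Nat.cast_pos.2 hn
  let V := LinearMap.range (stepLp (volume.restrict (Ioo 0 1)) (measurable_gradedCell n p))
  have hV : Module.finrank ℂ V ≤ n := (LinearMap.finrank_range_le _).trans (by simp)
  have happrox : ∀ᵐ x ∂ν, ∃ v ∈ V, ‖k x - v‖ ≤ M * (p * 2 ^ p) / n * W := by
    filter_upwards [hK, hk_eq] with x hKx hkx
    exact ⟨_, LinearMap.mem_range_self _ _, hKx.conj.norm_sub_stepLp_le p₀.succ_ne_zero hbp hkx⟩
  calc sVal T (2 * n) = sVal T (n + n) := by rw [two_mul]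
    _ ≤ M * (p * 2 ^ p) / n * W * √(ν.real univ) / √(n + 1) :=
        hk.sVal_add_le V hV (by positivity) happrox n
    _ ≤ M * (p * 2 ^ p) / n * W * √(ν.real univ) / √n := by
        gcongr
        linarith
    _ = M * (p * 2 ^ p) * W * √(ν.real univ) * (n : ℝ) ^ (-(3 / 2) : ℝ) := by
        have hpow : (n : ℝ) ^ (-(3 / 2) : ℝ) = (n * √n)⁻¹ := by
          rw [Real.sqrt_eq_rpow, Real.rpow_neg hn0.le, ← Real.rpow_one_add' hn0.le (by norm_num)]
          norm_num
        rw [hpow]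
        ring

end GradedMesh

section Kernel

theorem rpow_sub_one_mul_one_add_rpow_sub_one_le {a w : ℝ} (ha : a ≤ 1) (hw : 0 ≤ w) :
    w ^ (a - 1) * ((1 + w) ^ a - 1) ≤ w ^ a * (1 + w) ^ (a - 1) := by
  rcases hw.eq_or_lt with rfl | hw
  · simpa using Real.rpow_nonneg le_rfl a
  have hsplit : (1 + w) ^ a = (1 + w) ^ (a - 1) + (1 + w) ^ (a - 1) * w := by
    rw [Real.rpow_sub_one (by positivity)]
    field_simp
  have le_one : (1 + w) ^ (a - 1) ≤ 1 :=
    Real.rpow_le_one_of_one_le_of_nonpos (by linarith) (by linarith)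
  calc w ^ (a - 1) * ((1 + w) ^ a - 1) ≤ w ^ (a - 1) * ((1 + w) ^ (a - 1) * w) := by
        gcongr
        linarith
    _ = w ^ a * (1 + w) ^ (a - 1) := by
        rw [Real.rpow_sub_one hw.ne']
        field_simp

/-- The integrand defining `PhiFn η`, extended by `0` to the negative half-line. -/
def phiDensity (η w : ℝ) : ℝ :=
  max w 0 ^ (η - 3 / 2) * ((1 + max w 0) ^ (η - 1 / 2) - 1)

variable {η : ℝ}

theorem phiDensity_of_nonpos {w : ℝ} (hw : w ≤ 0) : phiDensity η w = 0 := by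
  simp [phiDensity, hw]

theorem phiDensity_nonneg (h1 : 1 / 2 ≤ η) (w : ℝ) : 0 ≤ phiDensity η w := by
  have one_le : 1 ≤ (1 + max w 0) ^ (η - 1 / 2) :=
    Real.one_le_rpow (by linarith [le_max_right w 0]) (by linarith)
  exact mul_nonneg (Real.rpow_nonneg (le_max_right w 0) _) (sub_nonneg.2 one_le)

theorem phiDensity_le_rpow_mul_rpow (h2 : η ≤ 3 / 2) (w : ℝ) :
    phiDensity η w ≤ max w 0 ^ (η - 1 / 2) * (1 + max w 0) ^ (η - 3 / 2) := by
  have h := rpow_sub_one_mul_one_add_rpow_sub_one_le (a := η - 1 / 2) (by linarith)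
    (le_max_right w 0)
  have hexp : η - 1 / 2 - 1 = η - 3 / 2 := by ring
  rwa [hexp] at h

theorem phiDensity_le_one_add_rpow (h1 : 1 / 2 ≤ η) (h2 : η ≤ 3 / 2) (w : ℝ) :
    phiDensity η w ≤ (1 + max w 0) ^ (2 * η - 2) := by
  calc phiDensity η w ≤ max w 0 ^ (η - 1 / 2) * (1 + max w 0) ^ (η - 3 / 2) :=
        phiDensity_le_rpow_mul_rpow h2 w
    _ ≤ (1 + max w 0) ^ (η - 1 / 2) * (1 + max w 0) ^ (η - 3 / 2) := by
        gcongr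
        linarith
    _ = (1 + max w 0) ^ (2 * η - 2) := by
        rw [← Real.rpow_add (by positivity)]
        ring_nf

theorem continuous_phiDensity (h1 : 1 / 2 < η) (h2 : η ≤ 3 / 2) : Continuous (phiDensity η) := by
  refine continuous_iff_continuousAt.2 fun w => ?_
  rcases le_or_gt w 0 with hw | hw
  · have hlim : Tendsto (fun v => max v 0 ^ (η - 1 / 2) * (1 + max v 0) ^ (η - 3 / 2)) (nhds w)
        (nhds 0) := by
      have hcont : ContinuousAt
          (fun v => max v 0 ^ (η - 1 / 2) * (1 + max v 0) ^ (η - 3 / 2)) w :=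
        ContinuousAt.mul (.rpow_const (by fun_prop) (.inr (by linarith)))
          (.rpow_const (by fun_prop) (.inl (by positivity)))
      simpa only [ContinuousAt, max_eq_right hw, Real.zero_rpow (sub_pos.2 h1).ne', zero_mul]
        using hcont
    rw [ContinuousAt, phiDensity_of_nonpos hw]
    exact squeeze_zero (phiDensity_nonneg h1.le) (phiDensity_le_rpow_mul_rpow h2) hlim
  · exact ContinuousAt.mul (.rpow_const (by fun_prop) (.inl (by simp [hw])))
      (.sub (.rpow_const (by fun_prop) (.inl (by positivity))) continuousAt_const)

theorem PhiFn_of_nonpos {s : ℝ} (hs : s ≤ 0) : PhiFn η s = 0 := by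
  simp [PhiFn, Ioo_eq_empty_of_le hs]

theorem PhiFn_eq_integral_phiDensity (η s : ℝ) : PhiFn η s = ∫ w in 0..s, phiDensity η w := by
  rcases le_total s 0 with hs | hs
  · rw [PhiFn_of_nonpos hs, intervalIntegral.integral_symm, intervalIntegral.integral_of_le hs,
      setIntegral_eq_zero_of_forall_eq_zero fun w hw => phiDensity_of_nonpos hw.2, neg_zero]
  · rw [intervalIntegral.integral_of_le hs, integral_Ioc_eq_integral_Ioo, PhiFn]
    refine setIntegral_congr_fun measurableSet_Ioo fun w hw => ?_
    simp only [phiDensity, max_eq_left hw.1.le]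

theorem hasDerivAt_PhiFn (h1 : 1 / 2 < η) (h2 : η ≤ 3 / 2) (s : ℝ) :
    HasDerivAt (PhiFn η) (phiDensity η s) s := by
  rw [funext (PhiFn_eq_integral_phiDensity η)]
  exact ((continuous_phiDensity h1 h2).integral_hasStrictDerivAt 0 s).hasDerivAt

theorem PhiFn_nonneg (h1 : 1 / 2 ≤ η) (s : ℝ) : 0 ≤ PhiFn η s := by
  rcases le_total s 0 with hs | hs
  · exact (PhiFn_of_nonpos hs).ge
  · rw [PhiFn_eq_integral_phiDensity]
    exact intervalIntegral.integral_nonneg hs fun w _ => phiDensity_nonneg h1 w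

theorem PhiFn_le_one_add_rpow_div (h1 : 1 / 2 < η) (h2 : η ≤ 3 / 2) (s : ℝ) :
    PhiFn η s ≤ (1 + max s 0) ^ (2 * η - 1) / (2 * η - 1) := by
  have hη : 0 < 2 * η - 1 := by linarith
  rcases le_total s 0 with hs | hs
  · rw [PhiFn_of_nonpos hs]
    positivity
  have hint : IntervalIntegrable (fun w => (1 + w) ^ (2 * η - 2)) volume 0 s := by
    refine ContinuousOn.intervalIntegrable_of_Icc hs fun w hw => ?_
    exact (ContinuousAt.rpow_const (by fun_prop) (.inl (by linarith [hw.1]))).continuousWithinAt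
  have hprimitive : ∫ w in 0..s, (1 + w) ^ (2 * η - 2) =
      ((1 + s) ^ (2 * η - 1) - 1) / (2 * η - 1) := by
    rw [intervalIntegral.integral_comp_add_left (fun v => v ^ (2 * η - 2)),
      integral_rpow (.inl (by linarith)), add_zero, Real.one_rpow]
    ring_nf
  calc PhiFn η s = ∫ w in 0..s, phiDensity η w := PhiFn_eq_integral_phiDensity η s
    _ ≤ ∫ w in 0..s, (1 + w) ^ (2 * η - 2) :=
        intervalIntegral.integral_mono_on hs ((continuous_phiDensity h1 h2).intervalIntegrable 0 s)
          hint fun w hw => by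
            simpa [max_eq_left hw.1] using phiDensity_le_one_add_rpow h1.le h2 w
    _ ≤ (1 + max s 0) ^ (2 * η - 1) / (2 * η - 1) := by
        rw [hprimitive, max_eq_left hs]
        gcongr
        linarith

/-- The kernel `q̃₂` with the normalising factor `c_*` removed and `H x` replaced by `η`. -/
def scaledPhi (η x y : ℝ) : ℝ :=
  y ^ (η - 1 / 2) * PhiFn η ((x - y) / y)

variable {x y : ℝ}

theorem one_add_max_sub_div_le_inv (hx : x ≤ 1) (hy : 0 < y) (hy1 : y ≤ 1) :
    1 + max ((x - y) / y) 0 ≤ y⁻¹ := by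
  rw [← max_add_add_left, sub_div, div_self hy.ne', add_sub_cancel, add_zero, ← one_div]
  exact max_le (by gcongr) ((one_le_div hy).2 hy1)

theorem one_add_max_sub_div_rpow_le (h1 : 1 / 2 < η) (hx : x ≤ 1) (hy : 0 < y) (hy1 : y ≤ 1) :
    (1 + max ((x - y) / y) 0) ^ (2 * η - 1) ≤ y ^ (-(2 * η - 1)) := by
  rw [Real.rpow_neg hy.le, ← Real.inv_rpow hy.le]
  have hη : 0 ≤ 2 * η - 1 := by linarith
  gcongr
  exact one_add_max_sub_div_le_inv hx hy hy1

theorem PhiFn_sub_div_le (h1 : 1 / 2 < η) (h2 : η ≤ 3 / 2) (hx : x ≤ 1) (hy : 0 < y)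
    (hy1 : y ≤ 1) : PhiFn η ((x - y) / y) ≤ y ^ (-(2 * η - 1)) / (2 * η - 1) := by
  have hη : 0 < 2 * η - 1 := by linarith
  refine (PhiFn_le_one_add_rpow_div h1 h2 _).trans ?_
  gcongr
  exact one_add_max_sub_div_rpow_le h1 hx hy hy1

theorem phiDensity_sub_div_mul_le (h1 : 1 / 2 < η) (h2 : η ≤ 3 / 2) (hx : x ≤ 1) (hy : 0 < y)
    (hy1 : y ≤ 1) : phiDensity η ((x - y) / y) * (x / y) ≤ y ^ (-(2 * η - 1)) := by
  have hs : x / y ≤ 1 + max ((x - y) / y) 0 := by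
    rw [sub_div, div_self hy.ne']
    linarith [le_max_left (x / y - 1) 0]
  set s := (x - y) / y
  calc phiDensity η s * (x / y) ≤ phiDensity η s * (1 + max s 0) :=
        mul_le_mul_of_nonneg_left hs (phiDensity_nonneg h1.le s)
    _ ≤ (1 + max s 0) ^ (2 * η - 2) * (1 + max s 0) := by
        gcongr
        exact phiDensity_le_one_add_rpow h1.le h2 s
    _ = (1 + max s 0) ^ (2 * η - 1) := by
        rw [← Real.rpow_add_one (by positivity)]
        ring_nf
    _ ≤ y ^ (-(2 * η - 1)) := one_add_max_sub_div_rpow_le h1 hx hy hy1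

theorem hasDerivAt_scaledPhi (h1 : 1 / 2 < η) (h2 : η ≤ 3 / 2) (x : ℝ) (hy : 0 < y) :
    HasDerivAt (scaledPhi η x)
      ((η - 1 / 2) * y ^ (η - 3 / 2) * PhiFn η ((x - y) / y) -
        y ^ (η - 3 / 2) * (phiDensity η ((x - y) / y) * (x / y))) y := by
  have hquot : HasDerivAt (fun z => (x - z) / z) (-x / y ^ 2) y := by
    refine (((hasDerivAt_id y).const_sub x).div (hasDerivAt_id y) hy.ne').congr_deriv ?_
    simp only [id]
    ring
  refine ((Real.hasDerivAt_rpow_const (.inl hy.ne')).mul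
    (HasDerivAt.comp (h := fun z => (x - z) / z) y (hasDerivAt_PhiFn h1 h2 _) hquot)).congr_deriv ?_
  have hexp : η - 3 / 2 = η - 1 / 2 - 1 := by ring
  rw [hexp, Real.rpow_sub_one hy.ne']
  simp only [Function.comp]
  field_simp
  ring

theorem abs_deriv_scaledPhi_le (h1 : 1 / 2 < η) (h2 : η ≤ 3 / 2) (hx : x ∈ Icc 0 1) (hy : 0 < y)
    (hy1 : y ≤ 1) :
    |(η - 1 / 2) * y ^ (η - 3 / 2) * PhiFn η ((x - y) / y) -
        y ^ (η - 3 / 2) * (phiDensity η ((x - y) / y) * (x / y))| ≤ y ^ (-1 - (η - 1 / 2)) := by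
  have hη : 0 < 2 * η - 1 := by linarith
  have hx0 : 0 ≤ x := hx.1
  have hexp : y ^ (-1 - (η - 1 / 2)) = y ^ (η - 3 / 2) * y ^ (-(2 * η - 1)) := by
    rw [← Real.rpow_add hy]
    ring_nf
  have hΦ := PhiFn_nonneg h1.le ((x - y) / y)
  have hφ := phiDensity_nonneg h1.le ((x - y) / y)
  rw [hexp]
  refine abs_sub_le_of_nonneg_of_le (by positivity) ?_ (by positivity) ?_
  · calc (η - 1 / 2) * y ^ (η - 3 / 2) * PhiFn η ((x - y) / y)
        ≤ (η - 1 / 2) * y ^ (η - 3 / 2) * (y ^ (-(2 * η - 1)) / (2 * η - 1)) := by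
          gcongr
          exact PhiFn_sub_div_le h1 h2 hx.2 hy hy1
      _ = 1 / 2 * (y ^ (η - 3 / 2) * y ^ (-(2 * η - 1))) := by
          rw [mul_div_assoc', div_eq_iff hη.ne']
          ring
      _ ≤ y ^ (η - 3 / 2) * y ^ (-(2 * η - 1)) :=
          mul_le_of_le_one_left (by positivity) (by norm_num)
  · gcongr
    exact phiDensity_sub_div_mul_le h1 h2 hx.2 hy hy1

theorem singularAtZero_scaledPhi (h1 : 1 / 2 < η) (h2 : η ≤ 1) (hx : x ∈ Icc 0 1) :
    SingularAtZero (scaledPhi η x) (2 * η - 1)⁻¹ (η - 1 / 2) where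
  norm_le y hy hy1 := by
    rw [scaledPhi,
      Real.norm_of_nonneg (mul_nonneg (Real.rpow_nonneg hy.le _) (PhiFn_nonneg h1.le _))]
    calc y ^ (η - 1 / 2) * PhiFn η ((x - y) / y)
        ≤ y ^ (η - 1 / 2) * (y ^ (-(2 * η - 1)) / (2 * η - 1)) := by
          gcongr
          exact PhiFn_sub_div_le h1 (by linarith) hx.2 hy hy1
      _ = (2 * η - 1)⁻¹ * y ^ (-(η - 1 / 2)) := by
          rw [div_eq_inv_mul (y ^ _), mul_left_comm, ← Real.rpow_add hy]
          ring_nf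
  norm_sub_le y y' hy hyy' hy' := by
    have hderiv : ∀ z ∈ Icc y y', HasDerivAt (scaledPhi η x) _ z := fun z hz =>
      hasDerivAt_scaledPhi h1 (by linarith) x (hy.trans_le hz.1)
    have hmvt := norm_image_sub_le_of_norm_deriv_right_le_segment (C := y ^ (-1 - (η - 1 / 2)))
      (fun z hz => (hderiv z hz).continuousAt.continuousWithinAt)
      (fun z hz => (hderiv z (Ico_subset_Icc_self hz)).hasDerivWithinAt)
      (fun z hz => (abs_deriv_scaledPhi_le h1 (by linarith) hx (hy.trans_le hz.1)
        (hz.2.le.trans hy')).trans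
          (Real.rpow_le_rpow_of_nonpos hy hz.1 (by linarith))) y' ⟨hyy', le_rfl⟩
    have one_le : 1 ≤ (2 * η - 1)⁻¹ := (one_le_inv₀ (by linarith)).2 (by linarith)
    calc ‖scaledPhi η x y - scaledPhi η x y'‖ ≤ 1 * ((y' - y) * y ^ (-1 - (η - 1 / 2))) := by
          rw [norm_sub_rev, one_mul, mul_comm]
          exact hmvt
      _ ≤ (2 * η - 1)⁻¹ * ((y' - y) * y ^ (-1 - (η - 1 / 2))) := by
          have := sub_nonneg.2 hyy'
          gcongr

theorem qTilde₂_eq_cstar_mul_scaledPhi (H : ℝ → ℝ) (hx : x < 1) (hy : 0 < y) :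
    qTilde₂ H x y = cstar (H x) * scaledPhi (H x) x y := by
  rw [qTilde₂, scaledPhi]
  split_ifs with h
  · ring
  · have hxy : x ≤ y := not_lt.1 fun hyx => h ⟨hy, hyx, hx⟩
    rw [PhiFn_of_nonpos (div_nonpos_of_nonpos_of_nonneg (sub_nonpos.2 hxy) hy.le), mul_zero,
      mul_zero]

-- `Γ(η - 1 / 2)` has a pole at `η = 1 / 2`, so `cstar` vanishes there to first order, which
-- compensates the growth of `PhiFn η`.
theorem cstar_eq_mul_sqrt (h1 : 1 / 2 < η) :
    cstar η = (η - 1 / 2) * √(2 * η * Real.Gamma (3 / 2 - η) /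
      (Real.Gamma (2 - 2 * η) * Real.Gamma (η + 1 / 2))) := by
  have hpos : 0 < η - 1 / 2 := sub_pos.2 h1
  have hΓ : Real.Gamma (η + 1 / 2) = (η - 1 / 2) * Real.Gamma (η - 1 / 2) := by
    rw [← Real.Gamma_add_one hpos.ne']
    ring_nf
  rw [cstar, hΓ, ← Real.sqrt_sq hpos.le, ← Real.sqrt_mul (sq_nonneg _), Real.sqrt_sq hpos.le]
  congr 1
  field_simp

theorem exists_cstar_le {β : ℝ} (hβ : β < 1) :
    ∃ C, 0 ≤ C ∧ ∀ η ∈ Ioc (1 / 2) β, cstar η ≤ C * (2 * η - 1) := by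
  have hΓ : ContinuousOn Real.Gamma (Ioi 0) := Real.differentiableOn_Gamma_Ioi.continuousOn
  have hcont : ContinuousOn (fun η => √(2 * η * Real.Gamma (3 / 2 - η) /
      (Real.Gamma (2 - 2 * η) * Real.Gamma (η + 1 / 2)))) (Icc (1 / 2) β) := by
    refine ((ContinuousOn.mul (by fun_prop) (hΓ.comp (by fun_prop) fun η hη => ?_)).div
      ((hΓ.comp (by fun_prop) fun η hη => ?_).mul (hΓ.comp (by fun_prop) fun η hη => ?_))
      fun η hη => (mul_pos (Real.Gamma_pos_of_pos ?_) (Real.Gamma_pos_of_pos ?_)).ne').sqrt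
    all_goals
      try rw [mem_Ioi]
      linarith [hη.1, hη.2]
  obtain ⟨C, hC⟩ := isCompact_Icc.exists_bound_of_continuousOn hcont
  refine ⟨max C 0, le_max_right _ _, fun η hη => ?_⟩
  have hpos : 0 < η - 1 / 2 := sub_pos.2 hη.1
  rw [cstar_eq_mul_sqrt hη.1, mul_comm]
  calc _ ≤ max C 0 * (η - 1 / 2) := by
        gcongr
        exact ((Real.le_norm_self _).trans (hC η (Ioc_subset_Icc_self hη))).trans (le_max_left _ _)
    _ ≤ max C 0 * (2 * η - 1) :=
        mul_le_mul_of_nonneg_left (by linarith) (le_max_right _ _)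

theorem exists_forall_singularAtZero_qTilde₂ {β : ℝ} (hβ : β < 1) :
    ∃ M, 0 ≤ M ∧ ∀ (H : ℝ → ℝ), ∀ x ∈ Ioo (0 : ℝ) 1, H x ∈ Ioc (1 / 2) β →
      SingularAtZero (fun y => (qTilde₂ H x y : ℂ)) M (β - 1 / 2) := by
  obtain ⟨C, hC, hcstar⟩ := exists_cstar_le hβ
  refine ⟨C, hC, fun H x hx hη => ?_⟩
  have hpos : 0 < 2 * H x - 1 := by linarith [hη.1]
  have hcstar0 : 0 ≤ cstar (H x) := Real.sqrt_nonneg _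
  have hM : |cstar (H x)| * (2 * H x - 1)⁻¹ ≤ C := by
    rw [abs_of_nonneg hcstar0, ← div_eq_mul_inv, div_le_iff₀ hpos]
    exact hcstar _ hη
  have hscaled := singularAtZero_scaledPhi hη.1 (hη.2.trans hβ.le) (Ioo_subset_Icc_self hx)
  refine ((hscaled.ofReal_const_mul (cstar (H x))).mono hM (sub_le_sub_right hη.2 _)).congr ?_
  exact fun y hy => by simp only [qTilde₂_eq_cstar_mul_scaledPhi H hx.2 hy.1]

end Kernel

theorem HolderOn.continuousOn {f : ℝ → ℝ} {r : ℝ} {s : Set ℝ} (hf : HolderOn f r s) (hr : 0 < r) :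
    ContinuousOn f s := by
  obtain ⟨C, hC⟩ := hf
  intro x hx
  have hlim : Tendsto (fun y => C * |y - x| ^ r) (nhdsWithin x s) (nhds 0) := by
    have hcont : ContinuousAt (fun y => C * |y - x| ^ r) x :=
      continuousAt_const.mul (.rpow_const (by fun_prop) (.inr hr.le))
    simpa [hr.ne'] using hcont.continuousWithinAt.tendsto
  refine tendsto_iff_dist_tendsto_zero.2
    (squeeze_zero' (.of_forall fun _ => dist_nonneg) ?_ hlim)
  filter_upwards [self_mem_nhdsWithin] with y hy
  exact hC y hy x hx

theorem exists_lt_mapsTo_Ioc_of_isCompact {X : Type*} [TopologicalSpace X] {f : X → ℝ} {s : Set X}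
    (hs : IsCompact s) (hne : s.Nonempty) (hf : ContinuousOn f s) {a b : ℝ}
    (h : MapsTo f s (Ioo a b)) : ∃ β < b, MapsTo f s (Ioc a β) := by
  obtain ⟨x₁, hx₁, hmax⟩ := hs.exists_isMaxOn hne hf
  exact ⟨f x₁, (h hx₁).2, fun x hx => ⟨(h hx).1, hmax hx⟩⟩

theorem qTilde₂_counting_bound_general
    (H : ℝ → ℝ) {β : ℝ} (hβ : β < 1)
    (hrange : ∀ᵐ x ∂(volume.restrict (Ioo (0 : ℝ) 1)), H x ∈ Ioc (1 / 2) β)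
    (Q : Lp ℂ 2 (volume.restrict (Ioo (0 : ℝ) 1)) →L[ℂ] Lp ℂ 2 (volume.restrict (Ioo (0 : ℝ) 1)))
    (hQ : ∀ f : Lp ℂ 2 (volume.restrict (Ioo (0 : ℝ) 1)),
      ∀ᵐ x ∂(volume.restrict (Ioo (0 : ℝ) 1)),
        (Q f : ℝ → ℂ) x = ∫ y in Ioo (0 : ℝ) 1, (qTilde₂ H x y : ℂ) * (f : ℝ → ℂ) y) :
    IsCompactOperator (⇑Q) ∧
    ∃ C : ℝ, 0 < C ∧ ∀ t : ℝ, 1 < t → (sCount Q t : ℝ) ≤ C * t ^ ((2 : ℝ) / 3) := by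
  obtain ⟨M, hM, hsing⟩ := exists_forall_singularAtZero_qTilde₂ hβ
  have hK : ∀ᵐ x ∂(volume.restrict (Ioo (0 : ℝ) 1)),
      SingularAtZero (fun y => (qTilde₂ H x y : ℂ)) M (β - 1 / 2) := by
    filter_upwards [hrange, ae_restrict_mem measurableSet_Ioo] with x hHx hx
    exact hsing H x hx hHx
  obtain ⟨D, hD⟩ := exists_sVal_two_mul_le_mul_rpow hQ hM (by linarith) hK
  refine ⟨isCompactOperator_of_sVal_le_mul_rpow (by norm_num) hD, ?_⟩
  rw [← inv_div (3 : ℝ) 2]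
  exact exists_forall_sCount_le_mul_rpow (by norm_num) hD

/-- Counting function bound for the remainder operator `Q̃₂` in the kernel decomposition
of the multifractal Brownian motion operator. -/
theorem qTilde₂_counting_bound
    (H : ℝ → ℝ) (r : ℝ) (hr : 0 < r) (hHol : HolderOn H r (Icc 0 1))
    (hrange : ∀ x ∈ Icc (0:ℝ) 1, 1/2 < H x ∧ H x < 1)
    (Q : Lp ℂ 2 (volume.restrict (Ioo (0:ℝ) 1)) →L[ℂ] Lp ℂ 2 (volume.restrict (Ioo (0:ℝ) 1)))
    (hQ : ∀ f : Lp ℂ 2 (volume.restrict (Ioo (0:ℝ) 1)),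
      ∀ᵐ x ∂(volume.restrict (Ioo (0:ℝ) 1)),
        (Q f : ℝ → ℂ) x = ∫ y in Ioo (0:ℝ) 1, (qTilde₂ H x y : ℂ) * (f : ℝ → ℂ) y) :
    IsCompactOperator (⇑Q) ∧
    ∃ C : ℝ, 0 < C ∧ ∀ t : ℝ, 1 < t → (sCount Q t : ℝ) ≤ C * t ^ ((2:ℝ)/3) := by
  obtain ⟨β, hβ, hmaps⟩ := exists_lt_mapsTo_Ioc_of_isCompact isCompact_Icc
    (nonempty_Icc.2 zero_le_one) (hHol.continuousOn hr) hrange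
  exact qTilde₂_counting_bound_general H hβ
    (ae_restrict_of_forall_mem measurableSet_Ioo fun _ hx => hmaps (Ioo_subset_Icc_self hx)) Q hQ
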